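/- Let π be a weak unichain policy for 𝔅_n with twin policy π' for 𝔇_n, and let (v,w) be an edge of 𝔅_n other than (s,s). Then z_{π',𝔇_n}(x_{v,w}, y_{v,w}) = p_v · z_{π,𝔅_n}(v,w). In particular, (x_{v,w}, y_{v,w}) is an improving switch for π' if and only if (v,w) is an improving switch for π. -/

import Mathlib

/-! ## The Markov decision process `𝔅_n` -/

/-- Vertices of the MDP `𝔅_n`: a transportation vertex `t`, a sink `s`, a dummy vertex `d`,
and vertices `a i`, `b i` for `i ∈ {1,…,n}`. -/
inductive BV : Type where
  | t : BV
  | s : BV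
  | d : BV
  | a : ℕ → BV
  | b : ℕ → BV
deriving DecidableEq

/-- The vertex `a i` for `i ∈ {1,…,n+1}`, with the convention `a (n+1) = s`. -/
def aN (n i : ℕ) : BV := if i = n + 1 then BV.s else BV.a i

/-- The vertex `b i` for `i ∈ {1,…,n+1}`, with the convention `b (n+1) = d`. -/
def bN (n i : ℕ) : BV := if i = n + 1 then BV.d else BV.b i

/-- The vertex set of `𝔅_n`. -/
def IsBVertex (n : ℕ) : BV → Prop
  | BV.t => True
  | BV.s => True
  | BV.d => True
  | BV.a i => 1 ≤ i ∧ i ≤ n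
  | BV.b i => 1 ≤ i ∧ i ≤ n

/-- The edge relation of `𝔅_n`: travel, enter, skip, board, stay, leave edges,
the edge `(d,s)` and the self-loop `(s,s)`. -/
def BEdge (n : ℕ) (u v : BV) : Prop :=
  (∃ i, 1 ≤ i ∧ i ≤ n ∧ u = BV.t ∧ v = BV.a i) ∨
  (∃ i, 1 ≤ i ∧ i ≤ n ∧ u = BV.a i ∧ v = BV.b i) ∨
  (∃ i, 1 ≤ i ∧ i ≤ n ∧ u = BV.a i ∧ v = aN n (i + 1)) ∨
  (∃ i, 1 ≤ i ∧ i ≤ n ∧ u = BV.a i ∧ v = BV.t) ∨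
  (∃ i, 1 ≤ i ∧ i ≤ n ∧ u = BV.b i ∧ v = bN n (i + 1)) ∨
  (∃ i, 1 ≤ i ∧ i ≤ n ∧ u = BV.b i ∧ v = aN n (i + 1)) ∨
  (u = BV.d ∧ v = BV.s) ∨ (u = BV.s ∧ v = BV.s)

/-- The reward function of `𝔅_n`: `r(enter i) = 2^i`, `r(stay i) = 3/4`,
`r(board i) = -2^i + 5/4`, and reward `0` on all other edges. -/
def rB (n : ℕ) (u v : BV) : ℚ :=
  match u, v with
  | BV.a i, BV.b j => if i = j then 2 ^ i else 0
  | BV.a i, BV.t => -(2 ^ i) + 5 / 4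
  | BV.b i, BV.b j => if j = i + 1 then 3 / 4 else 0
  | BV.b i, BV.d => if i = n then 3 / 4 else 0
  | _, _ => 0

/-- A policy for `𝔅_n` chooses an outgoing edge at every vertex. -/
def IsBPolicy (n : ℕ) (π : BV → BV) : Prop := ∀ u, IsBVertex n u → BEdge n u (π u)

/-- A policy is weak unichain if it reaches the sink `s` from every vertex. -/
def BWeakUnichain (n : ℕ) (π : BV → BV) : Prop :=
  ∀ u, IsBVertex n u → ∃ k, π^[k] u = BV.s

open Classical in
/-- The value of a vertex `v` w.r.t. a (weak unichain) policy `π`: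
the sum of the rewards along the path that `π` takes from `v` to the sink `s`. -/
noncomputable def BVal (n : ℕ) (π : BV → BV) (v : BV) : ℚ :=
  if h : ∃ k, π^[k] v = BV.s then
    ∑ i ∈ Finset.range (Nat.find h), rB n (π^[i] v) (π^[i + 1] v)
  else 0

/-- The reduced costs of the edge `(u,v)` w.r.t. the policy `π`. -/
noncomputable def zB (n : ℕ) (π : BV → BV) (u v : BV) : ℚ :=
  rB n u v + BVal n π v - BVal n π u

/-- The edge `(u,v)` is an improving switch for `π` if its reduced costs are positive. -/
def BImproving (n : ℕ) (π : BV → BV) (u v : BV) : Prop :=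
  BEdge n u v ∧ 0 < zB n π u v

/-- The Bland numbering `𝒩_{𝔅_n}` of the edges of `𝔅_n`. -/
def NB (n : ℕ) (u v : BV) : ℕ :=
  match u, v with
  | BV.t, BV.a i => i
  | BV.a i, BV.b _ => n + 1 + 5 * (i - 1)
  | BV.a i, BV.a _ => n + 2 + 5 * (i - 1)
  | BV.a i, BV.s => n + 2 + 5 * (i - 1)
  | BV.a i, BV.t => n + 3 + 5 * (i - 1)
  | BV.b i, BV.b _ => n + 4 + 5 * (i - 1)
  | BV.b i, BV.d => n + 4 + 5 * (i - 1)
  | BV.b i, BV.a _ => n + 5 + 5 * (i - 1)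
  | BV.b i, BV.s => n + 5 + 5 * (i - 1)
  | BV.d, BV.s => 6 * n + 1
  | BV.s, BV.s => 6 * n + 2
  | _, _ => 0

/-- One step of Bland's policy iteration with edge numbering `N`:
apply the improving switch with the smallest number. -/
def IsBlandStep (n : ℕ) (N : BV → BV → ℕ) (π π' : BV → BV) : Prop :=
  ∃ u v, BImproving n π u v ∧ (∀ u' v', BImproving n π u' v' → N u v ≤ N u' v') ∧
    π' = Function.update π u v

/-- `BlandReaches n N π ψ` says that Bland's policy iteration started at `π` visits `ψ`. -/
def BlandReaches (n : ℕ) (N : BV → BV → ℕ) : (BV → BV) → (BV → BV) → Prop :=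
  Relation.ReflTransGen (IsBlandStep n N)

/-- The canonical policy `π_0` for `0`: `travel 1`, `skip i` and `leave i` are active. -/
def pi0 (n : ℕ) : BV → BV := fun u =>
  match u with
  | BV.t => BV.a 1
  | BV.a i => aN n (i + 1)
  | BV.b i => aN n (i + 1)
  | BV.d => BV.s
  | BV.s => BV.s

/-- The optimal policy `π_*`: `travel 1`, `enter i` for all `i`, `leave j` for `j < n`,
and `stay n` are active. -/
def piStar (n : ℕ) : BV → BV := fun u =>
  match u with
  | BV.t => BV.a 1
  | BV.a i => BV.b i
  | BV.b i => if i = n then BV.d else BV.a (i + 1)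
  | BV.d => BV.s
  | BV.s => BV.s

/-! ## Bits and canonical policies -/

/-- The least significant set bit `ℓ_1(x)` (1-based). -/
noncomputable def lsb (x : ℕ) : ℕ := sInf {i | 1 ≤ i ∧ Nat.testBit x (i - 1)}

/-- The most significant set bit `m(x)` (1-based). -/
noncomputable def msb1 (x : ℕ) : ℕ := sSup {i | 1 ≤ i ∧ Nat.testBit x (i - 1)}

/-- The least unset bit `ℓ_0(x)` (1-based). -/
noncomputable def lzero (x : ℕ) : ℕ := sInf {i | 1 ≤ i ∧ ¬ Nat.testBit x (i - 1)}

/-- `L_i(x) = max { j ≤ i-2 | x_j = 1 or j = 1 }` (1-based bits). -/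
noncomputable def Lfun (i x : ℕ) : ℕ :=
  sSup {j | 1 ≤ j ∧ j ≤ i - 2 ∧ (Nat.testBit x (j - 1) ∨ j = 1)}

/-- `IsCanonical n x π` says that `π` is the canonical policy `π_x` for `x`. -/
noncomputable def IsCanonical (n x : ℕ) (π : BV → BV) : Prop :=
  IsBPolicy n π ∧
  if x = 0 then
    π BV.t = BV.a 1 ∧
      ∀ i, 1 ≤ i → i ≤ n → π (BV.a i) = aN n (i + 1) ∧ π (BV.b i) = aN n (i + 1)
  else
    π BV.t = BV.a (lsb x) ∧
    π (BV.b (msb1 x)) = aN n (msb1 x + 1) ∧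
    (∀ i, msb1 x < i → i ≤ n → π (BV.a i) = aN n (i + 1) ∧ π (BV.b i) = aN n (i + 1)) ∧
    ∀ i, 1 ≤ i → i ≤ n → Nat.testBit x (i - 1) →
      π (BV.a i) = BV.b i ∧
      (i = 2 → π (BV.b 1) = BV.a 2 ∧ (¬ Nat.testBit x 0 → π (BV.a 1) = BV.a 2)) ∧
      (3 ≤ i → Nat.testBit x (i - 2) → π (BV.b (i - 1)) = BV.a i) ∧
      (3 ≤ i → ¬ Nat.testBit x (i - 2) →
        π (BV.b (i - 1)) = BV.b i ∧ π (BV.a (i - 1)) = BV.a i ∧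
        π (BV.b (i - 2)) = BV.a (i - 1) ∧
        (Lfun i x < i - 2 →
          ∀ j, Lfun i x + 1 ≤ j → j ≤ i - 2 →
            π (BV.a j) = BV.t ∧ π (BV.b (j - 1)) = BV.b j) ∧
        (Lfun i x = 1 → ¬ Nat.testBit x 0 → π (BV.a 1) = BV.t))

/-- Activating a list of edges in a policy, from left to right. -/
def activateList (π : BV → BV) (L : List (BV × BV)) : BV → BV :=
  L.foldl (fun σ e => Function.update σ e.1 e.2) π

/-- The canonical phases w.r.t. an odd number `x` (with `ℓ := ℓ_0(x)`), as a list of edges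
to be activated in order. -/
noncomputable def phaseList (n x : ℕ) : List (BV × BV) :=
  let ℓ := lzero x
  (if Nat.testBit x ℓ then [(BV.b ℓ, aN n (ℓ + 1))] else []) ++
  (if Nat.testBit x ℓ ∨ msb1 x < ℓ then [(BV.b (ℓ - 1), BV.b ℓ)] else []) ++
  [(BV.a ℓ, BV.b ℓ), (BV.t, BV.a ℓ)] ++
  ((List.range (ℓ - 2)).map fun j => (BV.a (j + 1), BV.t)) ++
  [(BV.a (ℓ - 1), BV.a ℓ)] ++
  (((List.range (ℓ - 3)).reverse).map fun j => (BV.b (j + 1), BV.b (j + 2))) ++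
  (if ℓ = 2 then [(BV.b 1, BV.a 2)] else [])

/-! ## The Markov decision process `𝔇_n` -/

/-- Vertices of `𝔇_n`: the original vertices (`base`), and for every edge `(v,w)` of `𝔅_n`
other than the self-loop, the gadget vertices `x v w`, `y v w`, `z v w`. -/
inductive DV : Type where
  | base : BV → DV
  | x : BV → BV → DV
  | y : BV → BV → DV
  | z : BV → BV → DV
deriving DecidableEq

/-- The edges of `𝔅_n` that get replaced by gadgets (all edges except the self-loop `(s,s)`). -/
def DEdgePair (n : ℕ) (v w : BV) : Prop := BEdge n v w ∧ v ≠ BV.s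

/-- The vertex set of `𝔇_n`. -/
def IsDVertex (n : ℕ) : DV → Prop
  | DV.base v => IsBVertex n v
  | DV.x v w => DEdgePair n v w
  | DV.y v w => DEdgePair n v w
  | DV.z v w => DEdgePair n v w

/-- The agent vertices of `𝔇_n` (all vertices except the randomization vertices `y v w`). -/
def IsDAgent (n : ℕ) : DV → Prop
  | DV.base v => IsBVertex n v
  | DV.x v w => DEdgePair n v w
  | DV.y _ _ => False
  | DV.z v w => DEdgePair n v w

/-- The agent edges of `𝔇_n`. -/
def DEdge (n : ℕ) (u u' : DV) : Prop :=
  (∃ v w, DEdgePair n v w ∧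
    ((u = DV.base v ∧ u' = DV.x v w) ∨ (u = DV.x v w ∧ u' = DV.base v) ∨
     (u = DV.x v w ∧ u' = DV.y v w) ∨ (u = DV.z v w ∧ u' = DV.base w))) ∨
  (u = DV.base BV.s ∧ u' = DV.base BV.s)

/-- The reward function of `𝔇_n`: the edge `(z v w, w)` carries the reward of the original
edge `(v,w)`; all other agent edges have reward `0`. -/
def rD (n : ℕ) (u u' : DV) : ℚ :=
  match u, u' with
  | DV.z v w, DV.base w' => if w' = w then rB n v w else 0
  | _, _ => 0

/-- A policy for `𝔇_n` chooses an outgoing agent edge at every agent vertex. -/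
def IsDPolicy (n : ℕ) (π : DV → DV) : Prop := ∀ u, IsDAgent n u → DEdge n u (π u)

/-- `IsDVal n p π V` says that `V` satisfies the Bellman equations characterizing the value
function of the policy `π` for `𝔇_n` with probabilities `p`, with `V s = 0`. -/
def IsDVal (n : ℕ) (p : BV → ℚ) (π : DV → DV) (V : DV → ℚ) : Prop :=
  V (DV.base BV.s) = 0 ∧
  (∀ u, IsDAgent n u → V u = rD n u (π u) + V (π u)) ∧
  (∀ v w, DEdgePair n v w →
    V (DV.y v w) = p v * V (DV.z v w) + (1 - p v) * V (DV.base v))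

open Classical in
/-- The value function of a (weak unichain) policy `π` for `𝔇_n`: the unique solution of the
Bellman equations (normalized to `0` outside the vertex set). -/
noncomputable def DVal (n : ℕ) (p : BV → ℚ) (π : DV → DV) : DV → ℚ :=
  if h : ∃! V : DV → ℚ, IsDVal n p π V ∧ ∀ u, ¬ IsDVertex n u → V u = 0 then
    h.exists.choose
  else fun _ => 0

/-- The reduced costs of an agent edge `(u,u')` of `𝔇_n` w.r.t. the policy `π`. -/
noncomputable def zD (n : ℕ) (p : BV → ℚ) (π : DV → DV) (u u' : DV) : ℚ :=
  rD n u u' + DVal n p π u' - DVal n p π u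

/-- An agent edge of `𝔇_n` is an improving switch if its reduced costs are positive. -/
def DImproving (n : ℕ) (p : BV → ℚ) (π : DV → DV) (u u' : DV) : Prop :=
  DEdge n u u' ∧ 0 < zD n p π u u'

/-- One (agent or positive-probability randomization) step of the process `𝔇_n` under `π`. -/
def DStep (n : ℕ) (p : BV → ℚ) (π : DV → DV) (u u' : DV) : Prop :=
  (IsDAgent n u ∧ u' = π u) ∨
  (∃ v w, DEdgePair n v w ∧ u = DV.y v w ∧
    ((u' = DV.z v w ∧ 0 < p v) ∨ (u' = DV.base v ∧ 0 < 1 - p v)))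

/-- A policy for `𝔇_n` is weak unichain if it reaches `s` with probability one from every
vertex, i.e. `s` is reachable via active/positive-probability steps from every vertex. -/
def DWeakUnichain (n : ℕ) (p : BV → ℚ) (π : DV → DV) : Prop :=
  ∀ u, IsDVertex n u → Relation.ReflTransGen (DStep n p π) u (DV.base BV.s)

/-- The twin policy of a policy `π` for `𝔅_n`: every vertex `v ≠ s` is `π v`-oriented. -/
def twin (π : BV → BV) : DV → DV := fun u =>
  match u with
  | DV.base v => if v = BV.s then DV.base BV.s else DV.x v (π v)
  | DV.x v w => if w = π v then DV.y v w else DV.base v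
  | DV.y v w => DV.y v w
  | DV.z _ w => DV.base w

/-- The vertex numbering `𝒩_V` of `𝔅_n`: the order `(t, a 1, b 1, a 2, b 2, …, a n, b n, d, s)`. -/
def NV (n : ℕ) : BV → ℕ
  | BV.t => 1
  | BV.a i => 2 * i
  | BV.b i => 2 * i + 1
  | BV.d => 2 * n + 2
  | BV.s => 2 * n + 3

/-- The specific probabilities `p_v = 2^{-𝒩_V(v)·(n+5)}`. -/
noncomputable def pSpec (n : ℕ) (v : BV) : ℚ := (2 : ℚ) ^ (-((NV n v * (n + 5) : ℕ) : ℤ))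

/-- The set `B(v)` of agent edges of `𝔇_n` belonging to the vertex `v`. -/
def Belongs (n : ℕ) (v : BV) (e : DV × DV) : Prop :=
  ∃ w, DEdgePair n v w ∧
    (e = (DV.x v w, DV.y v w) ∨ e = (DV.base v, DV.x v w) ∨ e = (DV.x v w, DV.base v))

/-- Applying the improving switch `e` to the policy `π` yields `π'`. -/
def DApply (n : ℕ) (p : BV → ℚ) (π : DV → DV) (e : DV × DV) (π' : DV → DV) : Prop :=
  DImproving n p π e.1 e.2 ∧ π' = Function.update π e.1 e.2

/-- One step of Bland's policy iteration on `𝔇_n` with edge numbering `N`. -/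
def IsBlandStepD (n : ℕ) (p : BV → ℚ) (N : DV → DV → ℕ) (π π' : DV → DV) : Prop :=
  ∃ u u', DImproving n p π u u' ∧ (∀ a b, DImproving n p π a b → N u u' ≤ N a b) ∧
    π' = Function.update π u u'

/-- One step of Dantzig's policy iteration on `𝔇_n`: apply an improving switch of maximal
reduced costs. -/
def DantzigStep (n : ℕ) (p : BV → ℚ) (π π' : DV → DV) : Prop :=
  ∃ u u', DImproving n p π u u' ∧
    (∀ a b, DImproving n p π a b → zD n p π a b ≤ zD n p π u u') ∧
    π' = Function.update π u u'

/-- The finite set of vertices of `𝔅_n`, as a `Finset`. -/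
noncomputable def BVSet (n : ℕ) : Finset BV :=
  {BV.t, BV.d, BV.s} ∪ (Finset.Icc 1 n).image BV.a ∪ (Finset.Icc 1 n).image BV.b

/-- The finite set of agent vertices of `𝔇_n`, as a `Finset`. -/
noncomputable def DAgentSet (n : ℕ) : Finset DV := by
  classical
  exact ((BVSet n).image DV.base) ∪
    (((BVSet n ×ˢ BVSet n).filter fun e => DEdgePair n e.1 e.2).image fun e => DV.x e.1 e.2) ∪
    (((BVSet n ×ˢ BVSet n).filter fun e => DEdgePair n e.1 e.2).image fun e => DV.z e.1 e.2)

/-- The objective of the Largest Increase rule: the sum of the values of all agent vertices. -/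
noncomputable def LIobj (n : ℕ) (p : BV → ℚ) (π : DV → DV) : ℚ :=
  ∑ u ∈ DAgentSet n, DVal n p π u

/-- One step of the Largest Increase policy iteration on `𝔇_n`: apply an improving switch
maximizing the sum of all agent vertex values of the resulting policy. -/
def LIStep (n : ℕ) (p : BV → ℚ) (π π' : DV → DV) : Prop :=
  ∃ u u', DImproving n p π u u' ∧
    (∀ a b, DImproving n p π a b →
      LIobj n p (Function.update π a b) ≤ LIobj n p (Function.update π u u')) ∧
    π' = Function.update π u u'

/-- `N` is a Bland numbering `𝒩_{𝔇_n}` for `𝔇_n`: it is injective on agent edges, the edges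
`(x v w, v)` all come first, within each gadget `(x v w, y v w)` precedes `(v, x v w)`,
the gadget blocks are ordered according to `𝒩_{𝔅_n}`, and the self-loop comes last. -/
def IsDBlandNumbering (n : ℕ) (N : DV → DV → ℕ) : Prop :=
  (∀ u₁ u₂ u₁' u₂', DEdge n u₁ u₂ → DEdge n u₁' u₂' → N u₁ u₂ = N u₁' u₂' →
    u₁ = u₁' ∧ u₂ = u₂') ∧
  (∀ v w v' w', DEdgePair n v w → DEdgePair n v' w' →
    N (DV.x v w) (DV.base v) < N (DV.x v' w') (DV.y v' w')) ∧
  (∀ v w, DEdgePair n v w → N (DV.x v w) (DV.y v w) < N (DV.base v) (DV.x v w)) ∧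
  (∀ v w v' w', DEdgePair n v w → DEdgePair n v' w' → NB n v w < NB n v' w' →
    N (DV.base v) (DV.x v w) < N (DV.x v' w') (DV.y v' w')) ∧
  (∀ v w, DEdgePair n v w → N (DV.base v) (DV.x v w) < N (DV.base BV.s) (DV.base BV.s))

theorem BEdge_left {n : ℕ} {u v : BV} (h : BEdge n u v) : IsBVertex n u := by
  rcases h with ⟨i, h1, h2, rfl, _⟩ | ⟨i, h1, h2, rfl, _⟩ | ⟨i, h1, h2, rfl, _⟩ |
    ⟨i, h1, h2, rfl, _⟩ | ⟨i, h1, h2, rfl, _⟩ | ⟨i, h1, h2, rfl, _⟩ | ⟨rfl, _⟩ | ⟨rfl, _⟩ <;>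
    simp_all [IsBVertex]

theorem BEdge_right {n : ℕ} {u v : BV} (h : BEdge n u v) : IsBVertex n v := by
  have ha : ∀ i, 1 ≤ i → i ≤ n → IsBVertex n (aN n (i + 1)) := by
    intro i h1 h2
    unfold aN
    split_ifs
    · trivial
    · exact ⟨by omega, by omega⟩
  have hb : ∀ i, 1 ≤ i → i ≤ n → IsBVertex n (bN n (i + 1)) := by
    intro i h1 h2
    unfold bN
    split_ifs
    · trivial
    · exact ⟨by omega, by omega⟩
  rcases h with ⟨i, h1, h2, _, rfl⟩ | ⟨i, h1, h2, _, rfl⟩ | ⟨i, h1, h2, _, rfl⟩ |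
    ⟨i, h1, h2, _, rfl⟩ | ⟨i, h1, h2, _, rfl⟩ | ⟨i, h1, h2, _, rfl⟩ | ⟨_, rfl⟩ | ⟨_, rfl⟩
  · exact ⟨h1, h2⟩
  · exact ⟨h1, h2⟩
  · exact ha i h1 h2
  · trivial
  · exact hb i h1 h2
  · exact ha i h1 h2
  · trivial
  · trivial

theorem BVal_s (n : ℕ) (π : BV → BV) : BVal n π BV.s = 0 := by
  classical
  have h : ∃ k, π^[k] BV.s = BV.s := ⟨0, rfl⟩
  have h0 : Nat.find h = 0 := (Nat.find_eq_zero h).2 rfl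
  unfold BVal
  rw [dif_pos h]
  convert Finset.sum_range_zero _

theorem BVal_step (n : ℕ) (π : BV → BV) (v : BV) (hv : v ≠ BV.s)
    (h : ∃ k, π^[k] v = BV.s) :
    BVal n π v = rB n v (π v) + BVal n π (π v) := by
  classical
  have h' : ∃ k, π^[k] (π v) = BV.s := by
    obtain ⟨k, hk⟩ := h
    cases k with
    | zero => exact absurd hk hv
    | succ k => exact ⟨k, hk⟩
  have hf : Nat.find h = Nat.find h' + 1 := Nat.find_comp_succ h h' hv
  unfold BVal
  rw [dif_pos h, dif_pos h']
  have e : ∀ m, ∑ i ∈ Finset.range (m + 1), rB n (π^[i] v) (π^[i + 1] v) =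
      rB n v (π v) + ∑ i ∈ Finset.range m, rB n (π^[i] (π v)) (π^[i + 1] (π v)) := by
    intro m
    rw [Finset.sum_range_succ', add_comm]
    rfl
  rw [← e]
  convert rfl using 3
  convert hf.symm using 1

open Classical in
/-- The explicit value function of the twin policy. -/
noncomputable def twinVal (n : ℕ) (p : BV → ℚ) (π : BV → BV) (u : DV) : ℚ :=
  if IsDVertex n u then
    match u with
    | DV.base v => BVal n π v
    | DV.x v _ => BVal n π v
    | DV.y v w => p v * (rB n v w + BVal n π w) + (1 - p v) * BVal n π v
    | DV.z v w => rB n v w + BVal n π w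
  else 0

theorem twinVal_isDVal (n : ℕ) (p : BV → ℚ) (π : BV → BV) (hπ : IsBPolicy n π)
    (hwu : BWeakUnichain n π) : IsDVal n p (twin π) (twinVal n p π) := by
  refine ⟨?_, ?_, ?_⟩
  · have : IsDVertex n (DV.base BV.s) := trivial
    simp [twinVal, this, BVal_s]
  · intro u hu
    cases u with
    | base v =>
      have hv : IsBVertex n v := hu
      by_cases hs : v = BV.s
      · subst hs
        simp [twin, rD]
      · have h1 : IsDVertex n (DV.base v) := hu
        have h2 : IsDVertex n (DV.x v (π v)) := ⟨hπ v hv, hs⟩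
        simp [twin, rD, hs, twinVal, h1, h2]
    | x v w =>
      have hvw : DEdgePair n v w := hu
      have h1 : IsDVertex n (DV.x v w) := hu
      have h2 : IsDVertex n (DV.y v w) := hu
      have h3 : IsDVertex n (DV.base v) := BEdge_left hvw.1
      by_cases hw : w = π v
      · subst hw
        have := BVal_step n π v hvw.2 (hwu v (BEdge_left hvw.1))
        simp only [twin, rD, twinVal, h1, h2, if_true]
        rw [← this]
        ring
      · simp [twin, rD, hw, twinVal, h1, h3]
    | y v w => exact absurd hu (by simp [IsDAgent])
    | z v w =>
      have hvw : DEdgePair n v w := hu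
      have h1 : IsDVertex n (DV.z v w) := hu
      have h3 : IsDVertex n (DV.base w) := BEdge_right hvw.1
      simp [twin, rD, twinVal, h1, h3]
  · intro v w hvw
    have h1 : IsDVertex n (DV.z v w) := hvw
    have h2 : IsDVertex n (DV.y v w) := hvw
    have h3 : IsDVertex n (DV.base v) := BEdge_left hvw.1
    simp [twinVal, h1, h2, h3]

theorem isDVal_base (n : ℕ) (p : BV → ℚ)
    (hp : ∀ v, IsBVertex n v → v ≠ BV.s → 0 < p v ∧ p v ≤ 1)
    (π : BV → BV) (hπ : IsBPolicy n π) (V : DV → ℚ) (hV : IsDVal n p (twin π) V) :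
    ∀ k v, IsBVertex n v → π^[k] v = BV.s → V (DV.base v) = BVal n π v := by
  obtain ⟨h0, hA, hY⟩ := hV
  intro k
  induction k with
  | zero =>
    intro v _ h
    have h : v = BV.s := h
    rw [h, h0, BVal_s]
  | succ k ih =>
    intro v hv h
    by_cases hs : v = BV.s
    · rw [hs, h0, BVal_s]
    · have hE : DEdgePair n v (π v) := ⟨hπ v hv, hs⟩
      have e1 := hA (DV.base v) hv
      have e2 := hA (DV.x v (π v)) hE
      have e3 := hA (DV.z v (π v)) hE
      have e4 := hY v (π v) hE
      simp only [twin, rD, hs, if_true, if_false, zero_add] at e1 e2 e3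
      have ih' := ih (π v) (BEdge_right hE.1) h
      have hpos := (hp v hv hs).1
      rw [BVal_step n π v hs ⟨k + 1, h⟩, ← ih', ← e3]
      apply mul_left_cancel₀ hpos.ne'
      linarith

theorem DVal_twin (n : ℕ) (p : BV → ℚ)
    (hp : ∀ v, IsBVertex n v → v ≠ BV.s → 0 < p v ∧ p v ≤ 1)
    (π : BV → BV) (hπ : IsBPolicy n π) (hwu : BWeakUnichain n π) :
    DVal n p (twin π) = twinVal n p π := by
  have hW := twinVal_isDVal n p π hπ hwu
  have hW0 : ∀ u, ¬ IsDVertex n u → twinVal n p π u = 0 := by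
    intro u hu
    simp [twinVal, hu]
  have huniq : ∀ V : DV → ℚ, (IsDVal n p (twin π) V ∧ ∀ u, ¬ IsDVertex n u → V u = 0) →
      V = twinVal n p π := by
    rintro V ⟨hV, hV0⟩
    have hb : ∀ v, IsBVertex n v → V (DV.base v) = twinVal n p π (DV.base v) := by
      intro v hv
      obtain ⟨k, hk⟩ := hwu v hv
      rw [isDVal_base n p hp π hπ V hV k v hv hk, isDVal_base n p hp π hπ _ hW k v hv hk]
    have hz : ∀ v w, DEdgePair n v w → V (DV.z v w) = twinVal n p π (DV.z v w) := by
      intro v w h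
      rw [hV.2.1 (DV.z v w) h, hW.2.1 (DV.z v w) h]
      simp only [twin]
      rw [hb w (BEdge_right h.1)]
    have hy : ∀ v w, DEdgePair n v w → V (DV.y v w) = twinVal n p π (DV.y v w) := by
      intro v w h
      rw [hV.2.2 v w h, hW.2.2 v w h, hz v w h, hb v (BEdge_left h.1)]
    funext u
    by_cases hu : IsDVertex n u
    · cases u with
      | base v => exact hb v hu
      | x v w =>
        have hvw : DEdgePair n v w := hu
        rw [hV.2.1 (DV.x v w) hu, hW.2.1 (DV.x v w) hu]
        by_cases hw : w = π v
        · simp only [twin, if_pos hw]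
          rw [hy v w hvw]
        · simp only [twin, if_neg hw]
          rw [hb v (BEdge_left hvw.1)]
      | y v w => exact hy v w hu
      | z v w => exact hz v w hu
    · rw [hV0 u hu, hW0 u hu]
  have hex : ∃! V : DV → ℚ, IsDVal n p (twin π) V ∧ ∀ u, ¬ IsDVertex n u → V u = 0 :=
    ⟨twinVal n p π, ⟨hW, hW0⟩, huniq⟩
  unfold DVal
  rw [dif_pos hex]
  exact huniq _ hex.exists.choose_spec

/-- For a weak unichain policy `π` for `𝔅_n` with twin policy `π'` and an edge `(v,w)` of
`𝔅_n` other than the self-loop: `z_{π'}(x v w, y v w) = p_v · z_π(v,w)`; in particular,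
`(x v w, y v w)` is improving for `π'` iff `(v,w)` is improving for `π`. -/
theorem stmt12 (n : ℕ) (hn : 1 ≤ n) (p : BV → ℚ)
    (hp : ∀ v, IsBVertex n v → v ≠ BV.s → 0 < p v ∧ p v ≤ 1)
    (π : BV → BV) (hπ : IsBPolicy n π) (hwu : BWeakUnichain n π)
    (v w : BV) (hvw : DEdgePair n v w) :
    zD n p (twin π) (DV.x v w) (DV.y v w) = p v * zB n π v w ∧
    (DImproving n p (twin π) (DV.x v w) (DV.y v w) ↔ BImproving n π v w) := by
  have hv := BEdge_left hvw.1
  have key : zD n p (twin π) (DV.x v w) (DV.y v w) = p v * zB n π v w := by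
    have h1 : IsDVertex n (DV.x v w) := hvw
    have h2 : IsDVertex n (DV.y v w) := hvw
    unfold zD zB
    rw [DVal_twin n p hp π hπ hwu]
    simp only [rD, twinVal, h1, h2, if_true]
    ring
  refine ⟨key, ?_⟩
  have hpos := (hp v hv hvw.2).1
  unfold DImproving BImproving
  rw [key, mul_pos_iff_of_pos_left hpos]
  constructor
  · rintro ⟨_, h⟩
    exact ⟨hvw.1, h⟩
  · rintro ⟨_, h⟩
    exact ⟨Or.inl ⟨v, w, hvw, Or.inr (Or.inr (Or.inl ⟨rfl, rfl⟩))⟩, h⟩
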